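/- Let n ≥ 2 and let P be the tropical polytope generated by v^1,…,v^p ∈ ℝ^n. Assume P is pure (so every extreme point of P has exactly one extremality type), fix γ^1,…,γ^p ∈ ℝ^n, and define the perturbed points ṽ^1,…,ṽ^p ∈ G^n and the tropical polytope P̃ ⊆ G^n as in the context. Then every extreme point of P̃ has exactly one extremality type: for every extreme point w of P̃ and all indices i ≠ j, it is not the case that w is an extreme point of P̃ of type i and also of type j. -/

import Mathlib

section Defs
variable {α : Type*} [LinearOrder α] [AddCommGroup α]

/-- The sector `S(a,i) = {x | x_j - a_j ≤ x_i - a_i for all j}`. -/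
def sector {n : ℕ} (a : Fin n → α) (i : Fin n) : Set (Fin n → α) :=
  {x | ∀ j, x j - a j ≤ x i - a i}

/-- The tropical polytope generated by the points `v 0, …, v (p-1)`:
each coordinate of `x` is the maximum over `r` of `l r + v r i`. -/
def tropPoly {n p : ℕ} (v : Fin p → Fin n → α) : Set (Fin n → α) :=
  {x | ∃ l : Fin p → α, ∀ i, IsGreatest (Set.range fun r => l r + v r i) (x i)}

/-- `v` is an extreme point of `P` of type `i`. -/
def ExtremeOfType {n : ℕ} (P : Set (Fin n → α)) (v : Fin n → α) (i : Fin n) : Prop :=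
  v ∈ P ∧ ∀ x ∈ P ∩ sector v i, ∃ c : α, x = fun k => v k + c

/-- `v` is an extreme point of `P`. -/
def IsExtremePt {n : ℕ} (P : Set (Fin n → α)) (v : Fin n → α) : Prop :=
  v ∈ P ∧ ∀ x ∈ P, ∀ y ∈ P, (∀ k, v k = max (x k) (y k)) → v = x ∨ v = y

/-- The tropical half-space `H(a,I)`: `max_{i ∈ I} (x_i - a_i) ≥ max_{j ∉ I} (x_j - a_j)`. -/
def halfSpace {n : ℕ} (a : Fin n → α) (I : Set (Fin n)) : Set (Fin n → α) :=
  {x | ∃ i ∈ I, ∀ j ∉ I, x j - a j ≤ x i - a i}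

/-- `S_i(a)`, the set of indices `r` such that `v r ∈ S(a, i)`. -/
def typeSet {n p : ℕ} (v : Fin p → Fin n → α) (a : Fin n → α) (i : Fin n) : Set (Fin p) :=
  {r | v r ∈ sector a i}

/-- `a` is an `(I,j)`-pseudovertex of the tropical polytope generated by `v`. -/
def IsPseudovertex {n p : ℕ} (v : Fin p → Fin n → α) (a : Fin n → α) (I : Set (Fin n))
    (j : Fin n) : Prop :=
  (∀ r, ∃ i ∈ I, r ∈ typeSet v a i) ∧
  (∀ k ∉ I, ∃ i ∈ I, (typeSet v a i ∩ typeSet v a k).Nonempty) ∧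
  (∀ i ∈ I, ∃ r, r ∈ typeSet v a i ∩ typeSet v a j ∧ ∀ h ∈ I, h ≠ i → r ∉ typeSet v a h)

end Defs

/-- `P` is pure: `P₀ = {x ∈ P | x 0 = 0}` equals the closure of its interior, relative to
the hyperplane `{x | x 0 = 0}` with the subspace topology. -/
def IsPure {n : ℕ} [NeZero n] (P : Set (Fin n → ℝ)) : Prop :=
  letI P0 : Set {x : Fin n → ℝ // x 0 = 0} := {x | (x : Fin n → ℝ) ∈ P}
  P0 = closure (interior P0)

/-- The group `G = ℝ³` with componentwise addition and the lexicographic order. -/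
abbrev G : Type := ℝ ×ₗ ℝ ×ₗ ℝ

/-- First coordinate projection `π₁ : G → ℝ`. -/
def pi1 (g : G) : ℝ := (ofLex g).1
/-- Second coordinate projection `π₂ : G → ℝ`. -/
def pi2 (g : G) : ℝ := (ofLex (ofLex g).2).1
/-- Third coordinate projection `π₃ : G → ℝ`. -/
def pi3 (g : G) : ℝ := (ofLex (ofLex g).2).2

/-- Build an element of `G` from its three real coordinates. -/
def mkG (a b c : ℝ) : G := toLex (a, toLex (b, c))

/-!
Fix an index `i` and compare vectors through their normalizations `x - x_i`. The sector `S(a, i)`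
is then a down-set of the product order, `x` lies in a tropical polytope iff for each `i` some
generator lies below it, and the extreme points of type `i` are the generators that are minimal
for this order.

If `P` is pure, an extreme point `a` of type `i` is approximated by interior points `x` of `P`.
Moving `x` slightly in direction `i` stays in `P`, so some generator lies strictly inside
`S(x, i)`; for `x` close to `a` that generator lies in `S(a, i)`, hence is `a` up to translation.
So `a` is strictly inside `S(x, i)`, which can happen for only one `i`.

For the perturbed generators, let `ṽ^r` be extreme of type `i` and let `v^s` be an extreme point of
type `i` below `v^r`. If `v^r` were not of type `i`, the second coordinates would put `ṽ^s` below
`ṽ^r`; minimality of `ṽ^r` then forces `v^s` and `v^r` to agree up to translation, a contradiction.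
Hence the types of `ṽ^r` are among those of `v^r`.
-/

open Filter Topology

section OrderedGroup

variable {α : Type*} [AddCommGroup α] {n p : ℕ}

/-- The translate of `x` whose `i`-th coordinate vanishes. Comparing these translates in the
product order turns sectors into lower sets and extreme points of type `i` into minimal points. -/
def normalizeAt (i : Fin n) (x : Fin n → α) : Fin n → α := fun k => x k - x i

theorem normalizeAt_eq_iff_exists_eq_add {i : Fin n} {x a : Fin n → α} :
    normalizeAt i x = normalizeAt i a ↔ ∃ c, x = fun k => a k + c := by
  constructor
  · intro h
    refine ⟨x i - a i, funext fun k => ?_⟩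
    have hk : x k - x i = a k - a i := congrFun h k
    rw [eq_add_of_sub_eq hk]
    abel
  · rintro ⟨c, rfl⟩
    exact funext fun k => add_sub_add_right_eq_sub (a k) (a i) c

variable [LinearOrder α] [IsOrderedAddMonoid α]

theorem mem_sector_iff_normalizeAt_le {i : Fin n} {x a : Fin n → α} :
    x ∈ sector a i ↔ normalizeAt i x ≤ normalizeAt i a :=
  forall_congr' fun k => by
    rw [normalizeAt, normalizeAt, sub_le_sub_iff, sub_le_sub_iff, add_comm (x i)]

theorem mem_tropPoly_iff {v : Fin p → Fin n → α} {x : Fin n → α} :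
    x ∈ tropPoly v ↔ ∀ i, ∃ t, normalizeAt i (v t) ≤ normalizeAt i x := by
  constructor
  · rintro ⟨l, hl⟩ i
    obtain ⟨t, ht : l t + v t i = x i⟩ := (hl i).1
    refine ⟨t, fun k => ?_⟩
    have hk : l t + v t k ≤ x k := (hl k).2 ⟨t, rfl⟩
    calc v t k - v t i = l t + v t k - (l t + v t i) := (add_sub_add_left_eq_sub ..).symm
      _ ≤ x k - x i := by rw [ht]; gcongr
  · intro h
    rcases isEmpty_or_nonempty (Fin n) with _ | _
    · exact ⟨0, isEmptyElim⟩
    refine ⟨fun t => Finset.univ.inf' Finset.univ_nonempty fun k => x k - v t k,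
      fun i => ⟨?_, ?_⟩⟩
    · obtain ⟨t, ht⟩ := h i
      refine ⟨t, eq_sub_iff_add_eq.mp (le_antisymm (Finset.inf'_le _ (Finset.mem_univ i)) ?_)⟩
      exact Finset.le_inf' _ _ fun k _ => sub_le_sub_iff.mpr <| by
        simpa only [add_comm] using sub_le_sub_iff.mp (ht k)
    · rintro _ ⟨t, rfl⟩
      exact le_sub_iff_add_le.mp (Finset.inf'_le _ (Finset.mem_univ i))

theorem mem_tropPoly_self (v : Fin p → Fin n → α) (r : Fin p) : v r ∈ tropPoly v :=
  mem_tropPoly_iff.mpr fun _ => ⟨r, le_rfl⟩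

theorem add_const_mem_tropPoly_iff {v : Fin p → Fin n → α} {x : Fin n → α} (c : α) :
    (fun k => x k + c) ∈ tropPoly v ↔ x ∈ tropPoly v := by
  simp only [mem_tropPoly_iff, normalizeAt_eq_iff_exists_eq_add.mpr ⟨c, rfl⟩]

theorem extremeOfType_tropPoly_iff {v : Fin p → Fin n → α} {a : Fin n → α} {i : Fin n} :
    ExtremeOfType (tropPoly v) a i ↔ a ∈ tropPoly v ∧
      ∀ t, normalizeAt i (v t) ≤ normalizeAt i a → normalizeAt i (v t) = normalizeAt i a := by
  simp only [ExtremeOfType, Set.mem_inter_iff, mem_sector_iff_normalizeAt_le,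
    ← normalizeAt_eq_iff_exists_eq_add (i := i)]
  refine and_congr_right fun _ => ⟨fun h t ht => h _ ⟨mem_tropPoly_self v t, ht⟩, ?_⟩
  rintro h x ⟨hx, hxa⟩
  obtain ⟨t, htx⟩ := mem_tropPoly_iff.mp hx i
  exact hxa.antisymm ((h t (htx.trans hxa)).symm.trans_le htx)

theorem extremeOfType_add_const_iff {v : Fin p → Fin n → α} {a : Fin n → α} {i : Fin n} (c : α) :
    ExtremeOfType (tropPoly v) (fun k => a k + c) i ↔ ExtremeOfType (tropPoly v) a i := by
  simp only [extremeOfType_tropPoly_iff, add_const_mem_tropPoly_iff,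
    normalizeAt_eq_iff_exists_eq_add.mpr ⟨c, rfl⟩]

theorem ExtremeOfType.exists_generator_eq_add {v : Fin p → Fin n → α} {a : Fin n → α} {i : Fin n}
    (ha : ExtremeOfType (tropPoly v) a i) : ∃ t c, v t = fun k => a k + c := by
  rw [extremeOfType_tropPoly_iff] at ha
  obtain ⟨t, ht⟩ := mem_tropPoly_iff.mp ha.1 i
  exact ⟨t, normalizeAt_eq_iff_exists_eq_add.mp (ha.2 t ht)⟩

theorem exists_extremeOfType_normalizeAt_le (v : Fin p → Fin n → α) (r : Fin p) (i : Fin n) :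
    ∃ s, ExtremeOfType (tropPoly v) (v s) i ∧ normalizeAt i (v s) ≤ normalizeAt i (v r) := by
  obtain ⟨_, hle, ⟨s, rfl⟩, hmin⟩ :=
    (Set.finite_range fun t => normalizeAt i (v t)).exists_le_minimal ⟨r, rfl⟩
  exact ⟨s, extremeOfType_tropPoly_iff.mpr
    ⟨mem_tropPoly_self v s, fun t ht => ht.antisymm (hmin ⟨t, rfl⟩ ht)⟩, hle⟩

end OrderedGroup

section Real

variable {n p : ℕ}

theorem isClosed_setOf_mem_sector (y : Fin n → ℝ) (i : Fin n) : IsClosed {x | y ∈ sector x i} := by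
  have hinter : {x | y ∈ sector x i} = ⋂ k, {x | y k - x k ≤ y i - x i} := by
    ext x
    rw [Set.mem_iInter]
    rfl
  rw [hinter]
  exact isClosed_iInter fun k => isClosed_le (by fun_prop) (by fun_prop)

theorem eventually_mem_sector_imp (v : Fin p → Fin n → ℝ) (a : Fin n → ℝ) :
    ∀ᶠ x in 𝓝 a, ∀ t i, v t ∈ sector x i → v t ∈ sector a i := by
  refine eventually_all.mpr fun t => eventually_all.mpr fun i => ?_
  by_cases ht : v t ∈ sector a i
  · exact Eventually.of_forall fun _ _ => ht
  · filter_upwards [(isClosed_setOf_mem_sector (v t) i).isOpen_compl.mem_nhds ht] with x hx htx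
    exact absurd htx hx

theorem exists_generator_sub_lt_of_mem_interior {v : Fin p → Fin n → ℝ} {x : Fin n → ℝ}
    (hx : x ∈ interior (tropPoly v)) (i : Fin n) :
    ∃ t, ∀ k ≠ i, v t k - x k < v t i - x i := by
  have hcont : Continuous fun ε : ℝ => x + Pi.single i ε :=
    continuous_const.add (continuous_single (A := fun _ => ℝ) i)
  have hmem : ∀ᶠ ε in 𝓝 (0 : ℝ), x + Pi.single i ε ∈ tropPoly v :=
    hcont.continuousAt.eventually_mem (by simpa using mem_interior_iff_mem_nhds.mp hx)
  obtain ⟨ε, hε, hεpos : 0 < ε⟩ :=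
    ((hmem.filter_mono nhdsWithin_le_nhds).and (self_mem_nhdsWithin (s := Set.Ioi 0))).exists
  obtain ⟨t, ht⟩ := mem_tropPoly_iff.mp hε i
  refine ⟨t, fun k hk => ?_⟩
  have htk := ht k
  simp only [normalizeAt, Pi.add_apply, Pi.single_eq_same, Pi.single_eq_of_ne hk] at htk
  linarith

theorem ExtremeOfType.sub_lt_of_mem_interior {v : Fin p → Fin n → ℝ} {a x : Fin n → ℝ}
    {i k : Fin n} (ha : ExtremeOfType (tropPoly v) a i) (hx : x ∈ interior (tropPoly v))
    (hxa : ∀ t, v t ∈ sector x i → v t ∈ sector a i) (hk : k ≠ i) :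
    a k - x k < a i - x i := by
  obtain ⟨t, ht⟩ := exists_generator_sub_lt_of_mem_interior hx i
  have htx : v t ∈ sector x i := fun j => by
    rcases eq_or_ne j i with rfl | hj
    · exact le_rfl
    · exact (ht j hj).le
  obtain ⟨c, hc⟩ := ha.2 (v t) ⟨mem_tropPoly_self v t, hxa t htx⟩
  have htk := ht k hk
  simp only [hc] at htk
  linarith

theorem subsingleton_setOf_extremeOfType_of_subset_closure_interior {v : Fin p → Fin n → ℝ}
    (hv : tropPoly v ⊆ closure (interior (tropPoly v))) (a : Fin n → ℝ) :
    {i | ExtremeOfType (tropPoly v) a i}.Subsingleton := by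
  intro i hi j hj
  by_contra hij
  obtain ⟨x, hx, hxa⟩ := ((mem_closure_iff_frequently.mp (hv hi.1)).and_eventually
    (eventually_mem_sector_imp v a)).exists
  exact lt_asymm (hi.sub_lt_of_mem_interior hx (hxa · i) (Ne.symm hij))
    (hj.sub_lt_of_mem_interior hx (hxa · j) hij)

theorem IsPure.subset_closure_interior [NeZero n] {P : Set (Fin n → ℝ)} (hP : IsPure P)
    (hadd : ∀ (x : Fin n → ℝ) (c : ℝ), (fun k => x k + c) ∈ P ↔ x ∈ P) :
    P ⊆ closure (interior P) := by
  let P₀ : Set {x : Fin n → ℝ // x 0 = 0} := {x | (x : Fin n → ℝ) ∈ P}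
  -- Interiors and closures in the hyperplane pull back to those in `ℝ^n` along the continuous open
  -- map `x ↦ x - x_0`.
  let φ : (Fin n → ℝ) → {x : Fin n → ℝ // x 0 = 0} :=
    fun x => ⟨normalizeAt 0 x, sub_self (x 0)⟩
  have hφ : Continuous φ := by unfold φ normalizeAt; fun_prop
  have hφ_open : IsOpenMap φ := IsOpenMap.of_sections fun x =>
    ⟨fun y k => y.1 k + x 0,
      (continuous_pi fun k =>
        ((continuous_apply k).comp continuous_subtype_val).add continuous_const).continuousAt,
      by ext k; simp [φ, normalizeAt],
      fun y => by ext k; simp [φ, normalizeAt, y.2]⟩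
  have hpre : φ ⁻¹' P₀ = P := by
    ext x
    have hφx : (φ x).1 = fun k => x k + -x 0 := funext fun k => sub_eq_add_neg (x k) (x 0)
    change (φ x).1 ∈ P ↔ x ∈ P
    rw [hφx, hadd]
  have hP₀ : P₀ = closure (interior P₀) := hP
  rw [← hpre, ← hφ_open.preimage_interior_eq_interior_preimage hφ,
    ← hφ_open.preimage_closure_eq_closure_preimage hφ, ← hP₀]

theorem IsPure.subsingleton_setOf_extremeOfType [NeZero n] {v : Fin p → Fin n → ℝ}
    (hv : IsPure (tropPoly v)) (a : Fin n → ℝ) :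
    {i | ExtremeOfType (tropPoly v) a i}.Subsingleton :=
  subsingleton_setOf_extremeOfType_of_subset_closure_interior
    (hv.subset_closure_interior fun _ => add_const_mem_tropPoly_iff) a

end Real

section Perturbation

variable {α β : Type*} [LinearOrder α] [AddCommGroup α] [IsOrderedAddMonoid α]
  [LinearOrder β] [AddCommGroup β] [IsOrderedAddMonoid β] {n p : ℕ}

theorem ExtremeOfType.of_toLex {v : Fin p → Fin n → α} {e : Fin p → Fin n → β} {r : Fin p}
    {i : Fin n}
    (hr : ExtremeOfType (tropPoly fun t k => toLex (v t k, e t k))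
      (fun k => toLex (v r k, e r k)) i)
    (he : ∀ s, ExtremeOfType (tropPoly v) (v s) i → normalizeAt i (e s) ≤ normalizeAt i (e r)) :
    ExtremeOfType (tropPoly v) (v r) i := by
  obtain ⟨s, hs, hsr⟩ := exists_extremeOfType_normalizeAt_le v r i
  have hlift := (extremeOfType_tropPoly_iff.mp hr).2 s
    fun k => Prod.Lex.toLex_mono ⟨hsr k, he s hs k⟩
  have hfst : normalizeAt i (v s) = normalizeAt i (v r) :=
    funext fun k => congrArg (fun g => (ofLex g).1) (congrFun hlift k)
  rw [extremeOfType_tropPoly_iff, ← hfst]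
  exact ⟨mem_tropPoly_self v r, (extremeOfType_tropPoly_iff.mp hs).2⟩

variable {κ : Type*} [LinearOrder κ] [AddCommGroup κ] [IsOrderedAddMonoid κ]
  {v : Fin p → Fin n → α} {ε : β} {γ : Fin p → Fin n → κ} {vt : Fin p → Fin n → α ×ₗ β ×ₗ κ}

theorem ExtremeOfType.of_perturbed
    (hv : ∀ r, {i | ExtremeOfType (tropPoly v) (v r) i}.Subsingleton) (hε : 0 < ε)
    (hvt1 : ∀ r k, ExtremeOfType (tropPoly v) (v r) k →
      vt r k = toLex (v r k, toLex (ε, γ r k)))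
    (hvt2 : ∀ r k, ¬ ExtremeOfType (tropPoly v) (v r) k →
      vt r k = toLex (v r k, toLex (0, γ r k)))
    {r : Fin p} {i : Fin n} (hr : ExtremeOfType (tropPoly vt) (vt r) i) :
    ExtremeOfType (tropPoly v) (v r) i := by
  classical
  let b (t : Fin p) (k : Fin n) : β := if ExtremeOfType (tropPoly v) (v t) k then ε else 0
  obtain rfl : vt = fun t k => toLex (v t k, toLex (b t k, γ t k)) := by
    ext t k : 2
    by_cases htk : ExtremeOfType (tropPoly v) (v t) k
    · simp only [hvt1 t k htk, b, if_pos htk]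
    · simp only [hvt2 t k htk, b, if_neg htk]
  by_contra hri
  refine hri (hr.of_toLex fun s hs k => ?_)
  rcases eq_or_ne k i with rfl | hk
  · simp only [normalizeAt, sub_self, le_refl]
  have hsk : ¬ ExtremeOfType (tropPoly v) (v s) k := fun h => hk (hv s h hs)
  have hbrk : 0 ≤ b r k := by
    unfold b
    split_ifs
    exacts [hε.le, le_rfl]
  have hlt : b s k - b s i < b r k - b r i := by
    simp only [b, if_pos hs, if_neg hsk, if_neg hri, zero_sub, sub_zero]
    exact (neg_neg_of_pos hε).trans_le hbrk
  exact Prod.Lex.toLex_le_toLex.mpr (Or.inl hlt)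

theorem perturbed_unique_extremality_type_general
    (hv : ∀ r, {i | ExtremeOfType (tropPoly v) (v r) i}.Subsingleton) (hε : 0 < ε)
    (hvt1 : ∀ r k, ExtremeOfType (tropPoly v) (v r) k →
      vt r k = toLex (v r k, toLex (ε, γ r k)))
    (hvt2 : ∀ r k, ¬ ExtremeOfType (tropPoly v) (v r) k →
      vt r k = toLex (v r k, toLex (0, γ r k))) (w : Fin n → α ×ₗ β ×ₗ κ) :
    {i | ExtremeOfType (tropPoly vt) w i}.Subsingleton := by
  intro i hi j hj
  obtain ⟨t, c, ht⟩ := ExtremeOfType.exists_generator_eq_add hi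
  have hdescend (m : Fin n) (hm : ExtremeOfType (tropPoly vt) w m) :
      ExtremeOfType (tropPoly v) (v t) m :=
    .of_perturbed hv hε hvt1 hvt2 (by rwa [ht, extremeOfType_add_const_iff])
  exact hv t (hdescend i hi) (hdescend j hj)

end Perturbation

/-- if the tropical polytope `P` is pure, then every extreme point of the
symbolically perturbed polytope `P̃ ⊆ G^n` has exactly one extremality type. -/
theorem perturbed_unique_extremality_type {n p : ℕ} [NeZero n] (hn : 2 ≤ n)
    (v : Fin p → Fin n → ℝ) (hpure : IsPure (tropPoly v))
    (γ : Fin p → Fin n → ℝ) (vt : Fin p → Fin n → G)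
    (hvt1 : ∀ (r : Fin p) (k : Fin n), ExtremeOfType (tropPoly v) (v r) k →
      vt r k = mkG (v r k) 1 (γ r k))
    (hvt2 : ∀ (r : Fin p) (k : Fin n), ¬ ExtremeOfType (tropPoly v) (v r) k →
      vt r k = mkG (v r k) 0 (γ r k)) :
    ∀ w : Fin n → G, IsExtremePt (tropPoly vt) w →
      ∀ i j : Fin n, i ≠ j →
        ¬(ExtremeOfType (tropPoly vt) w i ∧ ExtremeOfType (tropPoly vt) w j) :=
  fun w _ _ _ hij h => hij <| perturbed_unique_extremality_type_general
    (hpure.subsingleton_setOf_extremeOfType <| v ·) one_pos hvt1 hvt2 w h.1 h.2
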